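/- Let G be a finite simple graph whose vertex set carries a linear order, let M ∈ Z be nonempty, and let w ∈ V(G) with w > τ(M). Then w ∈ N_⊕(M) if and only if w ∈ N_⊕(F(M)). -/

import Mathlib

/-!
Membership of `w` in `N_⊕(M)` is additive over `𝔽₂` in `M` (`mem_NSym_symmDiff`), so passing from
`M` to `F(M) = M ∆ {v} ∆ F₀(v)` changes nothing at `w` as soon as `{v}` and `F₀(v)` agree at `w`.
Since `τ(v) = τ(M) < w`, this is the defining property of `F₀(v)`.

What has to be shown is that a set with this property exists, so that the choice in `F₀(v)` is not
the default value: for every `u ≤ t`, the set `N^{>t}(u)` lies in the span of the `N^{>t}(b)` with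
`b ∈ B_t` (`exists_subset_Bset`). This is well-founded induction on `u`: either `u ∈ B_t`, or
`N^{>t}(u)` is a sum of `N^{>t}(b)` with `b < u`, and spans are closed under sums
(`exists_subset_of_forall_singleton`).
-/

open scoped Classical symmDiff

variable {V : Type}

/-- `N^{>t}(v)`: the neighbors of `v` that are greater than `t`. -/
def Ngt (G : SimpleGraph V) [LT V] (t v : V) : Set V := {w | G.Adj v w ∧ t < w}

/-- `N_⊕(M)`: the symmetric difference `⊕_{v ∈ M} N(v)` of the neighborhoods of the
vertices of `M`, i.e. the set of vertices adjacent to an odd number of elements of `M`. -/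
noncomputable def NSym (G : SimpleGraph V) (M : Finset V) : Set V :=
  {w | Odd (M.filter (fun v => G.Adj v w)).card}

/-- `N_⊕^{>t}(M) = N_⊕(M) ∩ V^{>t}`. -/
noncomputable def NSymGt (G : SimpleGraph V) [LT V] (t : V) (M : Finset V) : Set V :=
  NSym G M ∩ {w | t < w}

/-- The active basis `B_t`: the set of vertices `v ≤ t` such that `N^{>t}(v)` is not the
symmetric difference of the `N^{>t}`-neighborhoods of a set of vertices smaller than `v`. -/
noncomputable def Bset [Fintype V] [LinearOrder V] (G : SimpleGraph V) (t : V) : Finset V :=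
  Finset.univ.filter (fun v => v ≤ t ∧
    ¬ ∃ B : Finset V, (∀ b ∈ B, b < v) ∧ Ngt G t v = NSymGt G t B)

/-- `τ(v)`: the least `t ≥ v` with `v ∉ B_t`.  (It exists since `v ∉ B_{max V}`; the
maximum of `V` is inserted only to make the minimum well-defined.) -/
noncomputable def tau [Fintype V] [LinearOrder V] [Nonempty V] (G : SimpleGraph V) (v : V) :
    V :=
  (insert (Finset.univ.max' Finset.univ_nonempty)
    (Finset.univ.filter (fun t => v ≤ t ∧ v ∉ Bset G t))).min' (Finset.insert_nonempty _ _)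

/-- `τ(M) = min_{v ∈ M} τ(v)` for a nonempty finset `M` (junk value for `M = ∅`). -/
noncomputable def tauSet [Fintype V] [LinearOrder V] [Nonempty V] (G : SimpleGraph V)
    (M : Finset V) : V :=
  if h : M.Nonempty then (M.image (tau G)).min' (h.image _)
  else Finset.univ.max' Finset.univ_nonempty

/-- A nonempty set `M` is active if `max M < τ(M)`. -/
def ActiveSet [Fintype V] [LinearOrder V] [Nonempty V] (G : SimpleGraph V) (M : Finset V) :
    Prop :=
  ∃ h : M.Nonempty, M.max' h < tauSet G M

/-- Membership in the collection `Z`: the empty set, the singletons, and the active sets. -/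
def Zmem [Fintype V] [LinearOrder V] [Nonempty V] (G : SimpleGraph V) (M : Finset V) : Prop :=
  M = ∅ ∨ (∃ v : V, M = {v}) ∨ ActiveSet G M

/-- `F₀(v)`: the unique subset `B` of `B_{τ(v)}` with `N^{>τ(v)}(v) = N_⊕^{>τ(v)}(B)`. -/
noncomputable def F0 [Fintype V] [LinearOrder V] [Nonempty V] (G : SimpleGraph V) (v : V) :
    Finset V :=
  if h : ∃ B : Finset V, B ⊆ Bset G (tau G v) ∧ Ngt G (tau G v) v = NSymGt G (tau G v) B
  then h.choose else ∅

/-- The map `F`: `F(∅) = ∅` and `F(M) = M ∆ {v} ∆ F₀(v)` where `v` is the (for `M ∈ Z`,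
unique) element of `M` with `τ(v) = τ(M)`. -/
noncomputable def Fmap [Fintype V] [LinearOrder V] [Nonempty V] (G : SimpleGraph V)
    (M : Finset V) : Finset V :=
  if h : ∃ v ∈ M, tau G v = tauSet G M
  then (M ∆ {h.choose}) ∆ F0 G h.choose
  else ∅

lemma mem_NSym_symmDiff [DecidableEq V] (G : SimpleGraph V) (A B : Finset V) (w : V) :
    w ∈ NSym G (A ∆ B) ↔ (w ∈ NSym G A ↔ ¬ w ∈ NSym G B) := by
  have key : ((A ∆ B).filter (fun v => G.Adj v w)).card
      + 2 * ((A ∩ B).filter (fun v => G.Adj v w)).card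
      = (A.filter (fun v => G.Adj v w)).card + (B.filter (fun v => G.Adj v w)).card := by
    simp only [Finset.card_filter]
    have h1 : ∑ x ∈ A ∆ B, (if G.Adj x w then 1 else 0)
        = ∑ x ∈ A \ B, (if G.Adj x w then 1 else 0)
          + ∑ x ∈ B \ A, (if G.Adj x w then 1 else 0) :=
      Finset.sum_union disjoint_sdiff_sdiff
    have h2 := Finset.sum_inter_add_sum_sdiff A B (fun x => if G.Adj x w then 1 else 0)
    have h3 := Finset.sum_inter_add_sum_sdiff B A (fun x => if G.Adj x w then 1 else 0)
    rw [Finset.inter_comm] at h3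
    omega
  simp only [NSym, Set.mem_ofPred_eq, Nat.odd_iff]
  omega

lemma mem_NSym_singleton (G : SimpleGraph V) (v w : V) :
    w ∈ NSym G {v} ↔ G.Adj v w := by
  by_cases h : G.Adj v w <;> simp [NSym, Finset.filter_singleton, h]

lemma Ngt_eq_NSymGt_iff [LT V] (G : SimpleGraph V) (t v : V) (B : Finset V) :
    Ngt G t v = NSymGt G t B ↔ ∀ w, t < w → (G.Adj v w ↔ w ∈ NSym G B) := by
  simp only [Set.ext_iff, Ngt, NSymGt, Set.mem_inter_iff, Set.mem_ofPred_eq]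
  exact forall_congr' fun w => by tauto

/-- If each `N^{>t}(s)` with `s ∈ S` is a sum of sets `N^{>t}(b)` with `b ∈ C`, then so is
`N_⊕^{>t}(S)`. -/
lemma exists_subset_of_forall_singleton [LT V] (G : SimpleGraph V) (t : V) (C S : Finset V)
    (h : ∀ s ∈ S, ∃ B ⊆ C, ∀ w, t < w → (G.Adj s w ↔ w ∈ NSym G B)) :
    ∃ B ⊆ C, ∀ w, t < w → (w ∈ NSym G S ↔ w ∈ NSym G B) := by
  induction S using Finset.induction_on with
  | empty => exact ⟨∅, Finset.empty_subset _, fun _ _ => Iff.rfl⟩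
  | insert a S ha ih =>
    obtain ⟨B₁, hB₁, h₁⟩ := h a (Finset.mem_insert_self _ _)
    obtain ⟨B₂, hB₂, h₂⟩ := ih fun s hs => h s (Finset.mem_insert_of_mem hs)
    have hins : insert a S = {a} ∆ S := by
      ext x
      simp only [Finset.mem_insert, Finset.mem_symmDiff, Finset.mem_singleton]
      grind
    refine ⟨B₁ ∆ B₂, ?_, fun w hw => ?_⟩
    · intro x hx
      rcases Finset.mem_symmDiff.1 hx with hx | hx
      exacts [hB₁ hx.1, hB₂ hx.1]
    · rw [hins, mem_NSym_symmDiff, mem_NSym_symmDiff, mem_NSym_singleton, h₁ w hw, h₂ w hw]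

/-- The sets `N^{>t}(b)` with `b ∈ B_t` span all `N^{>t}(u)` with `u ≤ t`. -/
lemma exists_subset_Bset [Fintype V] [LinearOrder V] (G : SimpleGraph V) (t u : V)
    (hu : u ≤ t) : ∃ B ⊆ Bset G t, ∀ w, t < w → (G.Adj u w ↔ w ∈ NSym G B) := by
  induction u using WellFoundedLT.induction with
  | ind u ih =>
    by_cases hmem : u ∈ Bset G t
    · exact ⟨{u}, Finset.singleton_subset_iff.2 hmem,
        fun w _ => (mem_NSym_singleton G u w).symm⟩
    · have hB : ∃ B : Finset V, (∀ b ∈ B, b < u) ∧ Ngt G t u = NSymGt G t B := by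
        by_contra hcon
        exact hmem (Finset.mem_filter.2 ⟨Finset.mem_univ _, hu, hcon⟩)
      obtain ⟨B, hlt, hB⟩ := hB
      rw [Ngt_eq_NSymGt_iff] at hB
      obtain ⟨B', hB', h'⟩ := exists_subset_of_forall_singleton G t (Bset G t) B
        fun b hb => ih b (hlt b hb) ((hlt b hb).le.trans hu)
      exact ⟨B', hB', fun w hw => (hB w hw).trans (h' w hw)⟩

lemma le_tau [Fintype V] [LinearOrder V] [Nonempty V] (G : SimpleGraph V) (v : V) :
    v ≤ tau G v := by
  refine Finset.le_min' _ _ _ fun t ht => ?_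
  rcases Finset.mem_insert.1 ht with rfl | ht
  · exact Finset.le_max' _ _ (Finset.mem_univ _)
  · exact (Finset.mem_filter.1 ht).2.1

lemma F0_spec [Fintype V] [LinearOrder V] [Nonempty V] (G : SimpleGraph V) (v w : V)
    (hw : tau G v < w) : G.Adj v w ↔ w ∈ NSym G (F0 G v) := by
  have h : ∃ B : Finset V, B ⊆ Bset G (tau G v) ∧
      Ngt G (tau G v) v = NSymGt G (tau G v) B := by
    obtain ⟨B, hB, hspec⟩ := exists_subset_Bset G (tau G v) v (le_tau G v)
    exact ⟨B, hB, (Ngt_eq_NSymGt_iff G _ _ _).2 hspec⟩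
  rw [F0, dif_pos h]
  exact (Ngt_eq_NSymGt_iff G _ _ _).1 h.choose_spec.2 w hw

lemma exists_tau_eq_tauSet [Fintype V] [LinearOrder V] [Nonempty V] (G : SimpleGraph V)
    (M : Finset V) (hne : M.Nonempty) : ∃ v ∈ M, tau G v = tauSet G M := by
  rw [tauSet, dif_pos hne]
  exact Finset.mem_image.1 (Finset.min'_mem _ _)

/-- For nonempty `M ∈ Z` and any vertex `w > τ(M)`: `w ∈ N_⊕(M) ↔ w ∈ N_⊕(F(M))`. -/
theorem NSym_Fmap_iff [Fintype V] [LinearOrder V] [Nonempty V] (G : SimpleGraph V)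
    (M : Finset V) (hZ : Zmem G M) (hne : M.Nonempty) (w : V) (hw : tauSet G M < w) :
    w ∈ NSym G M ↔ w ∈ NSym G (Fmap G M) := by
  have h := exists_tau_eq_tauSet G M hne
  have hF := F0_spec G h.choose w (h.choose_spec.2.trans_lt hw)
  rw [Fmap, dif_pos h, mem_NSym_symmDiff, mem_NSym_symmDiff, mem_NSym_singleton, hF]
  by_cases h₁ : w ∈ NSym G M <;> by_cases h₂ : w ∈ NSym G (F0 G h.choose) <;> simp [h₁, h₂]
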